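/- arXiv:2511.01772 — 6 statements merged into one kernel-verified Lean document; each statement's English description precedes it below -/
import Mathlib

section
/- The additive submonoid S of ℤ³ generated by the vectors h₁=(1,0,0), h₂=(0,1,0), h₃=(0,0,1), h₄=(-2,-1,2), h₅=(1,-1,1), h₆=(2,-2,1) is pointed; that is, if u ∈ S and -u ∈ S then u = 0. -/
/-- The six generators of the semigroup `S`. -/
def h₁ : Fin 3 → ℤ := ![1, 0, 0]
def h₂ : Fin 3 → ℤ := ![0, 1, 0]
def h₃ : Fin 3 → ℤ := ![0, 0, 1]
def h₄ : Fin 3 → ℤ := ![-2, -1, 2]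
def h₅ : Fin 3 → ℤ := ![1, -1, 1]
def h₆ : Fin 3 → ℤ := ![2, -2, 1]

/-- The additive submonoid of `ℤ³` generated by `h₁, …, h₆`. -/
def S : AddSubmonoid (Fin 3 → ℤ) :=
  AddSubmonoid.closure {h₁, h₂, h₃, h₄, h₅, h₆}

theorem S_pos : ∀ u ∈ S, u = 0 ∨ 0 < u 0 + u 1 + 2 * u 2 := by
  intro u hu
  unfold S at hu
  induction hu using AddSubmonoid.closure_induction with
  | mem x hx =>
    right
    simp only [Set.mem_insert_iff, Set.mem_singleton_iff] at hx
    rcases hx with rfl | rfl | rfl | rfl | rfl | rfl <;>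
      simp [h₁, h₂, h₃, h₄, h₅, h₆]
  | zero => left; rfl
  | add x y _ _ hx hy =>
    rcases hx with rfl | hx
    · simpa using hy
    · right
      rcases hy with rfl | hy
      · simpa using hx
      · simp only [Pi.add_apply]
        omega

/-- The semigroup `S` is pointed: `u ∈ S` and `-u ∈ S` imply `u = 0`. -/
theorem S_pointed : ∀ u ∈ S, -u ∈ S → u = 0 := by
  intro u hu hv
  rcases S_pos u hu with h | h
  · exact h
  · rcases S_pos _ hv with h' | h'
    · exact neg_eq_zero.mp h'
    · simp only [Pi.neg_apply] at h'
      omega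
end

section
/- The additive submonoid S of ℤ³ generated by h₁,…,h₆ is not saturated: for u = (0,-1,1) one has 3u = h₄ + h₆ ∈ S, but u ∉ S. -/
/-- A submonoid `P` of `ℤ³` is saturated if `λ • u ∈ P` with `λ ≥ 1` implies `u ∈ P`. -/
def Saturated (P : AddSubmonoid (Fin 3 → ℤ)) : Prop :=
  ∀ (u : Fin 3 → ℤ) (l : ℤ), 1 ≤ l → l • u ∈ P → u ∈ P

theorem S_coeffs (x : Fin 3 → ℤ) (hx : x ∈ S) : ∃ a b c d e f : ℕ,
    x 0 = a - 2 * d + e + 2 * f ∧ x 1 = b - d - e - 2 * f ∧ x 2 = c + 2 * d + e + f := by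
  unfold S at hx
  induction hx using AddSubmonoid.closure_induction with
  | mem x hx =>
    simp only [Set.mem_insert_iff, Set.mem_singleton_iff] at hx
    rcases hx with rfl | rfl | rfl | rfl | rfl | rfl
    · exact ⟨1, 0, 0, 0, 0, 0, by simp [h₁]⟩
    · exact ⟨0, 1, 0, 0, 0, 0, by simp [h₂]⟩
    · exact ⟨0, 0, 1, 0, 0, 0, by simp [h₃]⟩
    · exact ⟨0, 0, 0, 1, 0, 0, by simp [h₄]⟩
    · exact ⟨0, 0, 0, 0, 1, 0, by simp [h₅]⟩
    · exact ⟨0, 0, 0, 0, 0, 1, by simp [h₆]⟩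
  | zero => exact ⟨0, 0, 0, 0, 0, 0, by simp⟩
  | add x y _ _ hx hy =>
    obtain ⟨a, b, c, d, e, f, h0, h1, h2⟩ := hx
    obtain ⟨a', b', c', d', e', f', k0, k1, k2⟩ := hy
    refine ⟨a + a', b + b', c + c', d + d', e + e', f + f', ?_, ?_, ?_⟩ <;>
      simp only [Pi.add_apply] <;> push_cast <;> omega

/-- `S` is not saturated: for `u = (0,-1,1)` one has `3 • u = h₄ + h₆ ∈ S` but `u ∉ S`. -/
theorem S_not_saturated :
    ¬ Saturated S ∧
    (3 : ℤ) • (![0, -1, 1] : Fin 3 → ℤ) = h₄ + h₆ ∧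
    h₄ + h₆ ∈ S ∧
    (![0, -1, 1] : Fin 3 → ℤ) ∉ S := by
  have hn : (![0, -1, 1] : Fin 3 → ℤ) ∉ S := by
    intro h
    obtain ⟨a, b, c, d, e, f, h0, h1, h2⟩ := S_coeffs _ h
    simp at h0 h1 h2
    omega
  have he : (3 : ℤ) • (![0, -1, 1] : Fin 3 → ℤ) = h₄ + h₆ := by
    ext i
    fin_cases i <;> simp [h₄, h₆]
  have hm : h₄ + h₆ ∈ S :=
    S.add_mem (AddSubmonoid.subset_closure (by simp)) (AddSubmonoid.subset_closure (by simp))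
  exact ⟨fun hs => hn (hs _ 3 (by norm_num) (he ▸ hm)), he, hm, hn⟩
end

section
/- The additive submonoid of ℤ³ generated by the set 𝒢_{A₁} = {g₁,g₅,g₇} ∪ {g_j - g₁ : j ∈ {2,3,4,6,8}} ∪ {g_j - g₅ : j ∈ {2,3,4,6,8}} ∪ {g_j - g₇ : j ∈ {3,4,6,8}} equals the additive submonoid T generated by the six-element set H₂ = {g₂-g₁, g₃-g₁, g₄-g₁, g₅, g₆-g₁, g₆-g₇}. -/
def g₁ : Fin 3 → ℤ := ![-1, 1, 0]
def g₂ : Fin 3 → ℤ := ![0, -1, 1]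
def g₃ : Fin 3 → ℤ := ![3, 0, -1]
def g₄ : Fin 3 → ℤ := ![1, 0, 0]
def g₅ : Fin 3 → ℤ := ![-2, 3, -1]
def g₆ : Fin 3 → ℤ := ![-2, -1, 2]
def g₇ : Fin 3 → ℤ := ![2, 2, -2]
def g₈ : Fin 3 → ℤ := ![2, -2, 1]

/-- The generating set `𝒢_{A₁}` of the chart semigroup for `A₁ = {g₁, g₅, g₇}`. -/
def GA1 : Set (Fin 3 → ℤ) :=
  {g₁, g₅, g₇} ∪
  {g₂ - g₁, g₃ - g₁, g₄ - g₁, g₆ - g₁, g₈ - g₁} ∪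
  {g₂ - g₅, g₃ - g₅, g₄ - g₅, g₆ - g₅, g₈ - g₅} ∪
  {g₃ - g₇, g₄ - g₇, g₆ - g₇, g₈ - g₇}

/-- The smaller generating set `H₂`. -/
def H2 : Set (Fin 3 → ℤ) :=
  {g₂ - g₁, g₃ - g₁, g₄ - g₁, g₅, g₆ - g₁, g₆ - g₇}

theorem aux (a b c d e f : ℕ) {x : Fin 3 → ℤ} (hx : x = a • (g₂ - g₁) + b • (g₃ - g₁) + c • (g₄ - g₁) + d • g₅ + e • (g₆ - g₁) + f • (g₆ - g₇)) :
    x ∈ AddSubmonoid.closure H2 := by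
  rw [hx]
  have h : ∀ x ∈ H2, ∀ n : ℕ, n • x ∈ AddSubmonoid.closure H2 := fun x hx n => AddSubmonoid.nsmul_mem _ (AddSubmonoid.subset_closure hx) n
  refine add_mem (add_mem (add_mem (add_mem (add_mem ?_ ?_) ?_) ?_) ?_) ?_ <;> exact h _ (by simp [H2]) _

/-- The submonoid generated by `𝒢_{A₁}` equals the submonoid `T` generated by `H₂`. -/
theorem closure_GA1_eq_closure_H2 :
    AddSubmonoid.closure GA1 = AddSubmonoid.closure H2 := by
  apply le_antisymm
  · rw [AddSubmonoid.closure_le]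
    rintro x (((h | h) | h) | h) <;> simp only [Set.mem_insert_iff, Set.mem_singleton_iff] at h
    · rcases h with rfl | rfl | rfl
      · exact aux 1 0 0 1 0 0 (by decide)
      · exact aux 0 0 0 1 0 0 (by decide)
      · exact aux 0 1 0 1 0 0 (by decide)
    · rcases h with rfl | rfl | rfl | rfl | rfl
      · exact aux 1 0 0 0 0 0 (by decide)
      · exact aux 0 1 0 0 0 0 (by decide)
      · exact aux 0 0 1 0 0 0 (by decide)
      · exact aux 0 0 0 0 1 0 (by decide)
      · exact aux 0 1 0 0 1 0 (by decide)
    · rcases h with rfl | rfl | rfl | rfl | rfl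
      · exact aux 2 0 0 0 0 0 (by decide)
      · exact aux 1 1 0 0 0 0 (by decide)
      · exact aux 0 1 0 0 1 0 (by decide)
      · exact aux 0 1 0 0 0 1 (by decide)
      · exact aux 0 2 0 0 0 1 (by decide)
    · rcases h with rfl | rfl | rfl | rfl
      · exact aux 1 0 0 0 0 0 (by decide)
      · exact aux 0 0 0 0 1 0 (by decide)
      · exact aux 0 0 0 0 0 1 (by decide)
      · exact aux 0 1 0 0 0 1 (by decide)
  · apply AddSubmonoid.closure_mono
    rintro x (rfl | rfl | rfl | rfl | rfl | rfl) <;> simp [GA1]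
end

section
/- The additive submonoid T of ℤ³ generated by H₂ = {(1,-2,1), (4,-1,-1), (2,-1,0), (-2,3,-1), (-1,-2,2), (-4,-3,4)} is pointed; that is, if u ∈ T and -u ∈ T then u = 0. -/
/-- The additive submonoid `T` of `ℤ³` generated by `H₂`. -/
def T : AddSubmonoid (Fin 3 → ℤ) :=
  AddSubmonoid.closure
    {![1, -2, 1], ![4, -1, -1], ![2, -1, 0], ![-2, 3, -1], ![-1, -2, 2], ![-4, -3, 4]}

theorem T_pos_aux : ∀ u ∈ T, u = 0 ∨ 0 < 4 * u 0 + 6 * u 1 + 9 * u 2 := by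
  intro u hu
  unfold T at hu
  induction hu using AddSubmonoid.closure_induction with
  | mem x hx =>
    right
    simp only [Set.mem_insert_iff, Set.mem_singleton_iff] at hx
    rcases hx with rfl | rfl | rfl | rfl | rfl | rfl <;> simp
  | zero => exact Or.inl rfl
  | add x y _ _ hx hy =>
    rcases hx with rfl | hx
    · simpa using hy
    · rcases hy with rfl | hy
      · right; simpa using hx
      · right
        simp only [Pi.add_apply]
        linarith

/-- The semigroup `T` is pointed: `u ∈ T` and `-u ∈ T` imply `u = 0`. -/
theorem T_pointed : ∀ u ∈ T, -u ∈ T → u = 0 := by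
  intro u hu hn
  rcases T_pos_aux u hu with h | h
  · exact h
  · rcases T_pos_aux (-u) hn with h' | h'
    · exact neg_eq_zero.mp h'
    · simp only [Pi.neg_apply] at h'
      linarith
end

section
/- There exist a finitely generated pointed non-saturated additive submonoid S of ℤ³ whose group closure is ℤ³, a finite generating set H of S together with a subset A = {a₁,a₂,a₃} ⊆ H with det(a₁ a₂ a₃) ≠ 0 such that the Nash chart semigroup S_A is pointed, and a finite generating set H' of S_A together with a subset A' = {b₁,b₂,b₃} ⊆ H' with det(b₁ b₂ b₃) ≠ 0, such that the Nash chart semigroup (S_A)_{A'} is pointed and there is a ℤ-linear automorphism of ℤ³ mapping S bijectively onto (S_A)_{A'}; in particular, the second iteration of the Nash blowup of the toric variety X(S) contains an affine chart isomorphic to X(S). -/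
/-- An additive submonoid `P` of `ℤ³` is pointed if `u ∈ P` and `-u ∈ P` imply `u = 0`. -/
def IsPointed (P : AddSubmonoid (Fin 3 → ℤ)) : Prop :=
  ∀ u ∈ P, -u ∈ P → u = 0

/-- The determinant of the `3 × 3` integer matrix whose columns are `a`, `b`, `c`. -/
def colDet (a b c : Fin 3 → ℤ) : ℤ := (Matrix.transpose (Matrix.of ![a, b, c])).det

/-- The generating set `𝒢_A = A ∪ 𝒢_A(a₁) ∪ 𝒢_A(a₂) ∪ 𝒢_A(a₃)` of the Nash chart
semigroup attached to a generating set `H` and a subset `A = {a₁, a₂, a₃} ⊆ H`, where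
`𝒢_A(aₖ) = {g - aₖ : g ∈ H \ A`, the matrix obtained from `(a₁ a₂ a₃)` by replacing the
column `aₖ` with `g` has nonzero determinant`}`. -/
def nashGens (H : Set (Fin 3 → ℤ)) (a₁ a₂ a₃ : Fin 3 → ℤ) : Set (Fin 3 → ℤ) :=
  {a₁, a₂, a₃} ∪
  ((fun g => g - a₁) '' {g ∈ H \ {a₁, a₂, a₃} | colDet g a₂ a₃ ≠ 0}) ∪
  ((fun g => g - a₂) '' {g ∈ H \ {a₁, a₂, a₃} | colDet a₁ g a₃ ≠ 0}) ∪
  ((fun g => g - a₃) '' {g ∈ H \ {a₁, a₂, a₃} | colDet a₁ a₂ g ≠ 0})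

/-- The Nash chart semigroup `P_A`: the additive submonoid generated by `𝒢_A`. -/
def nashChart (H : Set (Fin 3 → ℤ)) (a₁ a₂ a₃ : Fin 3 → ℤ) : AddSubmonoid (Fin 3 → ℤ) :=
  AddSubmonoid.closure (nashGens H a₁ a₂ a₃)


def nbH : Set (Fin 3 → ℤ) := {![1, 0, 0], ![1, -1, 1], ![0, 2, -1], ![0, 1, 0], ![0, 0, 1], ![-3, 1, 1]}

def nbK : Set (Fin 3 → ℤ) := {![0, -1, 1], ![-3, 1, 1], ![1, -3, 2], ![-1, 1, 0], ![3, 0, -1], ![1, 0, 0], ![4, -2, 0], ![0, 2, -1]}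

def nbM : Set (Fin 3 → ℤ) := {![-1, 2, -1], ![3, 1, -2], ![-7, 3, 1], ![-3, 2, 0], ![1, 1, -1], ![1, -3, 2]}

lemma nb_pointed (G : Set (Fin 3 → ℤ)) (p q r : ℤ)
    (h : ∀ g ∈ G, 0 < p * g 0 + q * g 1 + r * g 2) : IsPointed (AddSubmonoid.closure G) := by
  have key : ∀ x ∈ AddSubmonoid.closure G, x = 0 ∨ 0 < p * x 0 + q * x 1 + r * x 2 := by
    intro x hx
    induction hx using AddSubmonoid.closure_induction with
    | mem x hx => exact Or.inr (h x hx)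
    | zero => exact Or.inl rfl
    | add x y _ _ hx hy =>
      rcases hx with rfl | hx
      · simpa using hy
      · rcases hy with rfl | hy
        · right; simpa using hx
        · right; simp only [Pi.add_apply]; linarith
  intro u hu hn
  rcases key u hu with h1 | h1
  · exact h1
  · rcases key _ hn with h2 | h2
    · simpa using h2
    · simp only [Pi.neg_apply] at h2; linarith

lemma nb_chart_le (H : Set (Fin 3 → ℤ)) (a b c : Fin 3 → ℤ) (P : AddSubmonoid (Fin 3 → ℤ))
    (ha : a ∈ P) (hb : b ∈ P) (hc : c ∈ P)
    (h : ∀ g ∈ H, (g = a ∨ g = b ∨ g = c) ∨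
      ((colDet g b c = 0 ∨ g - a ∈ P) ∧ (colDet a g c = 0 ∨ g - b ∈ P) ∧
        (colDet a b g = 0 ∨ g - c ∈ P))) : nashChart H a b c ≤ P := by
  refine AddSubmonoid.closure_le.2 ?_
  rintro x (((hx | ⟨g, ⟨⟨hg, hA⟩, hd⟩, rfl⟩) | ⟨g, ⟨⟨hg, hA⟩, hd⟩, rfl⟩) | ⟨g, ⟨⟨hg, hA⟩, hd⟩, rfl⟩)
  · rcases hx with rfl | rfl | rfl <;> assumption
  all_goals
    rcases h g hg with h | h
    · exact absurd h hA
    · tauto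

lemma nb_mem1 {H : Set (Fin 3 → ℤ)} {a b c : Fin 3 → ℤ} (g : Fin 3 → ℤ) (hg : g ∈ H)
    (hA : ¬ (g = a ∨ g = b ∨ g = c)) (hd : colDet g b c ≠ 0) : g - a ∈ nashChart H a b c :=
  AddSubmonoid.subset_closure (Or.inl (Or.inl (Or.inr ⟨g, ⟨⟨hg, hA⟩, hd⟩, rfl⟩)))

lemma nb_mem2 {H : Set (Fin 3 → ℤ)} {a b c : Fin 3 → ℤ} (g : Fin 3 → ℤ) (hg : g ∈ H)
    (hA : ¬ (g = a ∨ g = b ∨ g = c)) (hd : colDet a g c ≠ 0) : g - b ∈ nashChart H a b c :=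
  AddSubmonoid.subset_closure (Or.inl (Or.inr ⟨g, ⟨⟨hg, hA⟩, hd⟩, rfl⟩))

lemma nb_mem3 {H : Set (Fin 3 → ℤ)} {a b c : Fin 3 → ℤ} (g : Fin 3 → ℤ) (hg : g ∈ H)
    (hA : ¬ (g = a ∨ g = b ∨ g = c)) (hd : colDet a b g ≠ 0) : g - c ∈ nashChart H a b c :=
  AddSubmonoid.subset_closure (Or.inr ⟨g, ⟨⟨hg, hA⟩, hd⟩, rfl⟩)

lemma nb_mem0 {H : Set (Fin 3 → ℤ)} {a b c : Fin 3 → ℤ} (g : Fin 3 → ℤ)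
    (hA : g = a ∨ g = b ∨ g = c) : g ∈ nashChart H a b c :=
  AddSubmonoid.subset_closure (Or.inl (Or.inl (Or.inl hA)))

lemma nb_chart1 : nashChart nbH ![1, 0, 0] ![0, 2, -1] ![-3, 1, 1] = AddSubmonoid.closure nbK := by
  apply le_antisymm
  · apply nb_chart_le
    · exact (show (![1, 0, 0] : Fin 3 → ℤ) = ![1, 0, 0] by decide) ▸ (AddSubmonoid.subset_closure (show ![1, 0, 0] ∈ nbK by simp [nbK]))
    · exact (show (![0, 2, -1] : Fin 3 → ℤ) = ![0, 2, -1] by decide) ▸ (AddSubmonoid.subset_closure (show ![0, 2, -1] ∈ nbK by simp [nbK]))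
    · exact (show (![-3, 1, 1] : Fin 3 → ℤ) = ![-3, 1, 1] by decide) ▸ (AddSubmonoid.subset_closure (show ![-3, 1, 1] ∈ nbK by simp [nbK]))
    rintro g (rfl | rfl | rfl | rfl | rfl | rfl)
    · left; decide
    · refine Or.inr ⟨?_, ?_, ?_⟩
      · right
        rw [show (![1, -1, 1] - ![1, 0, 0] : Fin 3 → ℤ) = ![0, -1, 1] by decide]
        exact (show (![0, -1, 1] : Fin 3 → ℤ) = ![0, -1, 1] by decide) ▸ (AddSubmonoid.subset_closure (show ![0, -1, 1] ∈ nbK by simp [nbK]))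
      · right
        rw [show (![1, -1, 1] - ![0, 2, -1] : Fin 3 → ℤ) = ![1, -3, 2] by decide]
        exact (show (![1, -3, 2] : Fin 3 → ℤ) = ![1, -3, 2] by decide) ▸ (AddSubmonoid.subset_closure (show ![1, -3, 2] ∈ nbK by simp [nbK]))
      · right
        rw [show (![1, -1, 1] - ![-3, 1, 1] : Fin 3 → ℤ) = ![4, -2, 0] by decide]
        exact (show (![4, -2, 0] : Fin 3 → ℤ) = ![4, -2, 0] by decide) ▸ (AddSubmonoid.subset_closure (show ![4, -2, 0] ∈ nbK by simp [nbK]))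
    · left; decide
    · refine Or.inr ⟨?_, ?_, ?_⟩
      · right
        rw [show (![0, 1, 0] - ![1, 0, 0] : Fin 3 → ℤ) = ![-1, 1, 0] by decide]
        exact (show (![-1, 1, 0] : Fin 3 → ℤ) = ![-1, 1, 0] by decide) ▸ (AddSubmonoid.subset_closure (show ![-1, 1, 0] ∈ nbK by simp [nbK]))
      · right
        rw [show (![0, 1, 0] - ![0, 2, -1] : Fin 3 → ℤ) = ![0, -1, 1] by decide]
        exact (show (![0, -1, 1] : Fin 3 → ℤ) = ![0, -1, 1] by decide) ▸ (AddSubmonoid.subset_closure (show ![0, -1, 1] ∈ nbK by simp [nbK]))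
      · right
        rw [show (![0, 1, 0] - ![-3, 1, 1] : Fin 3 → ℤ) = ![3, 0, -1] by decide]
        exact (show (![3, 0, -1] : Fin 3 → ℤ) = ![3, 0, -1] by decide) ▸ (AddSubmonoid.subset_closure (show ![3, 0, -1] ∈ nbK by simp [nbK]))
    · refine Or.inr ⟨?_, ?_, ?_⟩
      · right
        rw [show (![0, 0, 1] - ![1, 0, 0] : Fin 3 → ℤ) = ![-1, 0, 1] by decide]
        exact (show (![0, -1, 1] + ![-1, 1, 0] : Fin 3 → ℤ) = ![-1, 0, 1] by decide) ▸ (add_mem (AddSubmonoid.subset_closure (show ![0, -1, 1] ∈ nbK by simp [nbK])) (AddSubmonoid.subset_closure (show ![-1, 1, 0] ∈ nbK by simp [nbK])))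
      · right
        rw [show (![0, 0, 1] - ![0, 2, -1] : Fin 3 → ℤ) = ![0, -2, 2] by decide]
        exact (show (![0, -1, 1] + ![0, -1, 1] : Fin 3 → ℤ) = ![0, -2, 2] by decide) ▸ (add_mem (AddSubmonoid.subset_closure (show ![0, -1, 1] ∈ nbK by simp [nbK])) (AddSubmonoid.subset_closure (show ![0, -1, 1] ∈ nbK by simp [nbK])))
      · right
        rw [show (![0, 0, 1] - ![-3, 1, 1] : Fin 3 → ℤ) = ![3, -1, 0] by decide]
        exact (show (![0, -1, 1] + ![3, 0, -1] : Fin 3 → ℤ) = ![3, -1, 0] by decide) ▸ (add_mem (AddSubmonoid.subset_closure (show ![0, -1, 1] ∈ nbK by simp [nbK])) (AddSubmonoid.subset_closure (show ![3, 0, -1] ∈ nbK by simp [nbK])))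
    · left; decide
  · refine AddSubmonoid.closure_le.2 ?_
    rintro g (rfl | rfl | rfl | rfl | rfl | rfl | rfl | rfl)
    · exact (show (![1, -1, 1] - ![1, 0, 0] : Fin 3 → ℤ) = ![0, -1, 1] by decide) ▸ nb_mem1 (H := nbH) (a := ![1, 0, 0]) (b := ![0, 2, -1]) (c := ![-3, 1, 1]) (![1, -1, 1]) (by simp [nbH]) (by decide) (by simp [colDet, Matrix.det_fin_three])
    · exact nb_mem0 _ (by decide)
    · exact (show (![1, -1, 1] - ![0, 2, -1] : Fin 3 → ℤ) = ![1, -3, 2] by decide) ▸ nb_mem2 (H := nbH) (a := ![1, 0, 0]) (b := ![0, 2, -1]) (c := ![-3, 1, 1]) (![1, -1, 1]) (by simp [nbH]) (by decide) (by simp [colDet, Matrix.det_fin_three])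
    · exact (show (![0, 1, 0] - ![1, 0, 0] : Fin 3 → ℤ) = ![-1, 1, 0] by decide) ▸ nb_mem1 (H := nbH) (a := ![1, 0, 0]) (b := ![0, 2, -1]) (c := ![-3, 1, 1]) (![0, 1, 0]) (by simp [nbH]) (by decide) (by simp [colDet, Matrix.det_fin_three])
    · exact (show (![0, 1, 0] - ![-3, 1, 1] : Fin 3 → ℤ) = ![3, 0, -1] by decide) ▸ nb_mem3 (H := nbH) (a := ![1, 0, 0]) (b := ![0, 2, -1]) (c := ![-3, 1, 1]) (![0, 1, 0]) (by simp [nbH]) (by decide) (by simp [colDet, Matrix.det_fin_three])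
    · exact nb_mem0 _ (by decide)
    · exact (show (![1, -1, 1] - ![-3, 1, 1] : Fin 3 → ℤ) = ![4, -2, 0] by decide) ▸ nb_mem3 (H := nbH) (a := ![1, 0, 0]) (b := ![0, 2, -1]) (c := ![-3, 1, 1]) (![1, -1, 1]) (by simp [nbH]) (by decide) (by simp [colDet, Matrix.det_fin_three])
    · exact nb_mem0 _ (by decide)

lemma nb_chart2 : nashChart nbK ![0, -1, 1] ![1, -3, 2] ![4, -2, 0] = AddSubmonoid.closure nbM := by
  apply le_antisymm
  · apply nb_chart_le
    · exact (show (![-1, 2, -1] + ![1, -3, 2] : Fin 3 → ℤ) = ![0, -1, 1] by decide) ▸ (add_mem (AddSubmonoid.subset_closure (show ![-1, 2, -1] ∈ nbM by simp [nbM])) (AddSubmonoid.subset_closure (show ![1, -3, 2] ∈ nbM by simp [nbM])))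
    · exact (show (![1, -3, 2] : Fin 3 → ℤ) = ![1, -3, 2] by decide) ▸ (AddSubmonoid.subset_closure (show ![1, -3, 2] ∈ nbM by simp [nbM]))
    · exact (show (![3, 1, -2] + ![1, -3, 2] : Fin 3 → ℤ) = ![4, -2, 0] by decide) ▸ (add_mem (AddSubmonoid.subset_closure (show ![3, 1, -2] ∈ nbM by simp [nbM])) (AddSubmonoid.subset_closure (show ![1, -3, 2] ∈ nbM by simp [nbM])))
    rintro g (rfl | rfl | rfl | rfl | rfl | rfl | rfl | rfl)
    · left; decide
    · refine Or.inr ⟨?_, ?_, ?_⟩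
      · right
        rw [show (![-3, 1, 1] - ![0, -1, 1] : Fin 3 → ℤ) = ![-3, 2, 0] by decide]
        exact (show (![-3, 2, 0] : Fin 3 → ℤ) = ![-3, 2, 0] by decide) ▸ (AddSubmonoid.subset_closure (show ![-3, 2, 0] ∈ nbM by simp [nbM]))
      · right
        rw [show (![-3, 1, 1] - ![1, -3, 2] : Fin 3 → ℤ) = ![-4, 4, -1] by decide]
        exact (show (![-1, 2, -1] + ![-3, 2, 0] : Fin 3 → ℤ) = ![-4, 4, -1] by decide) ▸ (add_mem (AddSubmonoid.subset_closure (show ![-1, 2, -1] ∈ nbM by simp [nbM])) (AddSubmonoid.subset_closure (show ![-3, 2, 0] ∈ nbM by simp [nbM])))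
      · right
        rw [show (![-3, 1, 1] - ![4, -2, 0] : Fin 3 → ℤ) = ![-7, 3, 1] by decide]
        exact (show (![-7, 3, 1] : Fin 3 → ℤ) = ![-7, 3, 1] by decide) ▸ (AddSubmonoid.subset_closure (show ![-7, 3, 1] ∈ nbM by simp [nbM]))
    · left; decide
    · refine Or.inr ⟨?_, ?_, ?_⟩
      · right
        rw [show (![-1, 1, 0] - ![0, -1, 1] : Fin 3 → ℤ) = ![-1, 2, -1] by decide]
        exact (show (![-1, 2, -1] : Fin 3 → ℤ) = ![-1, 2, -1] by decide) ▸ (AddSubmonoid.subset_closure (show ![-1, 2, -1] ∈ nbM by simp [nbM]))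
      · right
        rw [show (![-1, 1, 0] - ![1, -3, 2] : Fin 3 → ℤ) = ![-2, 4, -2] by decide]
        exact (show (![-1, 2, -1] + ![-1, 2, -1] : Fin 3 → ℤ) = ![-2, 4, -2] by decide) ▸ (add_mem (AddSubmonoid.subset_closure (show ![-1, 2, -1] ∈ nbM by simp [nbM])) (AddSubmonoid.subset_closure (show ![-1, 2, -1] ∈ nbM by simp [nbM])))
      · left; simp [colDet, Matrix.det_fin_three]
    · refine Or.inr ⟨?_, ?_, ?_⟩
      · right
        rw [show (![3, 0, -1] - ![0, -1, 1] : Fin 3 → ℤ) = ![3, 1, -2] by decide]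
        exact (show (![3, 1, -2] : Fin 3 → ℤ) = ![3, 1, -2] by decide) ▸ (AddSubmonoid.subset_closure (show ![3, 1, -2] ∈ nbM by simp [nbM]))
      · right
        rw [show (![3, 0, -1] - ![1, -3, 2] : Fin 3 → ℤ) = ![2, 3, -3] by decide]
        exact (show (![-1, 2, -1] + ![3, 1, -2] : Fin 3 → ℤ) = ![2, 3, -3] by decide) ▸ (add_mem (AddSubmonoid.subset_closure (show ![-1, 2, -1] ∈ nbM by simp [nbM])) (AddSubmonoid.subset_closure (show ![3, 1, -2] ∈ nbM by simp [nbM])))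
      · right
        rw [show (![3, 0, -1] - ![4, -2, 0] : Fin 3 → ℤ) = ![-1, 2, -1] by decide]
        exact (show (![-1, 2, -1] : Fin 3 → ℤ) = ![-1, 2, -1] by decide) ▸ (AddSubmonoid.subset_closure (show ![-1, 2, -1] ∈ nbM by simp [nbM]))
    · refine Or.inr ⟨?_, ?_, ?_⟩
      · right
        rw [show (![1, 0, 0] - ![0, -1, 1] : Fin 3 → ℤ) = ![1, 1, -1] by decide]
        exact (show (![1, 1, -1] : Fin 3 → ℤ) = ![1, 1, -1] by decide) ▸ (AddSubmonoid.subset_closure (show ![1, 1, -1] ∈ nbM by simp [nbM]))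
      · right
        rw [show (![1, 0, 0] - ![1, -3, 2] : Fin 3 → ℤ) = ![0, 3, -2] by decide]
        exact (show (![-1, 2, -1] + ![1, 1, -1] : Fin 3 → ℤ) = ![0, 3, -2] by decide) ▸ (add_mem (AddSubmonoid.subset_closure (show ![-1, 2, -1] ∈ nbM by simp [nbM])) (AddSubmonoid.subset_closure (show ![1, 1, -1] ∈ nbM by simp [nbM])))
      · right
        rw [show (![1, 0, 0] - ![4, -2, 0] : Fin 3 → ℤ) = ![-3, 2, 0] by decide]
        exact (show (![-3, 2, 0] : Fin 3 → ℤ) = ![-3, 2, 0] by decide) ▸ (AddSubmonoid.subset_closure (show ![-3, 2, 0] ∈ nbM by simp [nbM]))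
    · left; decide
    · refine Or.inr ⟨?_, ?_, ?_⟩
      · right
        rw [show (![0, 2, -1] - ![0, -1, 1] : Fin 3 → ℤ) = ![0, 3, -2] by decide]
        exact (show (![-1, 2, -1] + ![1, 1, -1] : Fin 3 → ℤ) = ![0, 3, -2] by decide) ▸ (add_mem (AddSubmonoid.subset_closure (show ![-1, 2, -1] ∈ nbM by simp [nbM])) (AddSubmonoid.subset_closure (show ![1, 1, -1] ∈ nbM by simp [nbM])))
      · right
        rw [show (![0, 2, -1] - ![1, -3, 2] : Fin 3 → ℤ) = ![-1, 5, -3] by decide]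
        exact (show (![-1, 2, -1] + ![-1, 2, -1] + ![1, 1, -1] : Fin 3 → ℤ) = ![-1, 5, -3] by decide) ▸ (add_mem (add_mem (AddSubmonoid.subset_closure (show ![-1, 2, -1] ∈ nbM by simp [nbM])) (AddSubmonoid.subset_closure (show ![-1, 2, -1] ∈ nbM by simp [nbM]))) (AddSubmonoid.subset_closure (show ![1, 1, -1] ∈ nbM by simp [nbM])))
      · right
        rw [show (![0, 2, -1] - ![4, -2, 0] : Fin 3 → ℤ) = ![-4, 4, -1] by decide]
        exact (show (![-1, 2, -1] + ![-3, 2, 0] : Fin 3 → ℤ) = ![-4, 4, -1] by decide) ▸ (add_mem (AddSubmonoid.subset_closure (show ![-1, 2, -1] ∈ nbM by simp [nbM])) (AddSubmonoid.subset_closure (show ![-3, 2, 0] ∈ nbM by simp [nbM])))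
  · refine AddSubmonoid.closure_le.2 ?_
    rintro g (rfl | rfl | rfl | rfl | rfl | rfl)
    · exact (show (![-1, 1, 0] - ![0, -1, 1] : Fin 3 → ℤ) = ![-1, 2, -1] by decide) ▸ nb_mem1 (H := nbK) (a := ![0, -1, 1]) (b := ![1, -3, 2]) (c := ![4, -2, 0]) (![-1, 1, 0]) (by simp [nbK]) (by decide) (by simp [colDet, Matrix.det_fin_three])
    · exact (show (![3, 0, -1] - ![0, -1, 1] : Fin 3 → ℤ) = ![3, 1, -2] by decide) ▸ nb_mem1 (H := nbK) (a := ![0, -1, 1]) (b := ![1, -3, 2]) (c := ![4, -2, 0]) (![3, 0, -1]) (by simp [nbK]) (by decide) (by simp [colDet, Matrix.det_fin_three])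
    · exact (show (![-3, 1, 1] - ![4, -2, 0] : Fin 3 → ℤ) = ![-7, 3, 1] by decide) ▸ nb_mem3 (H := nbK) (a := ![0, -1, 1]) (b := ![1, -3, 2]) (c := ![4, -2, 0]) (![-3, 1, 1]) (by simp [nbK]) (by decide) (by simp [colDet, Matrix.det_fin_three])
    · exact (show (![-3, 1, 1] - ![0, -1, 1] : Fin 3 → ℤ) = ![-3, 2, 0] by decide) ▸ nb_mem1 (H := nbK) (a := ![0, -1, 1]) (b := ![1, -3, 2]) (c := ![4, -2, 0]) (![-3, 1, 1]) (by simp [nbK]) (by decide) (by simp [colDet, Matrix.det_fin_three])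
    · exact (show (![1, 0, 0] - ![0, -1, 1] : Fin 3 → ℤ) = ![1, 1, -1] by decide) ▸ nb_mem1 (H := nbK) (a := ![0, -1, 1]) (b := ![1, -3, 2]) (c := ![4, -2, 0]) (![1, 0, 0]) (by simp [nbK]) (by decide) (by simp [colDet, Matrix.det_fin_three])
    · exact nb_mem0 _ (by decide)

def nbE : (Fin 3 → ℤ) ≃ₗ[ℤ] (Fin 3 → ℤ) where
  toFun x := ![-x 0 - 3 * x 1 + x 2, 2 * x 0 + 2 * x 1 + x 2, -x 0 - x 2]
  invFun x := ![-2 * x 0 - 3 * x 1 - 5 * x 2, x 0 + 2 * x 1 + 3 * x 2, 2 * x 0 + 3 * x 1 + 4 * x 2]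
  map_add' x y := by
    ext i; fin_cases i <;> simp <;> ring
  map_smul' c x := by
    ext i; fin_cases i <;> simp <;> ring
  left_inv x := by
    ext i; fin_cases i <;> simp <;> ring
  right_inv x := by
    ext i; fin_cases i <;> simp <;> ring

lemma nb_unsat : ¬ Saturated (AddSubmonoid.closure nbH) := by
  intro h
  have key : ∀ x ∈ AddSubmonoid.closure nbH, ∃ a b c d e f : ℕ,
      x 0 = a + b - 3 * f ∧ x 1 = - b + 2 * c + d + f ∧ x 2 = b - c + e + f := by
    intro x hx
    induction hx using AddSubmonoid.closure_induction with
    | mem x hx =>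
      rcases hx with rfl | rfl | rfl | rfl | rfl | rfl
      · exact ⟨1, 0, 0, 0, 0, 0, by simp⟩
      · exact ⟨0, 1, 0, 0, 0, 0, by simp⟩
      · exact ⟨0, 0, 1, 0, 0, 0, by simp⟩
      · exact ⟨0, 0, 0, 1, 0, 0, by simp⟩
      · exact ⟨0, 0, 0, 0, 1, 0, by simp⟩
      · exact ⟨0, 0, 0, 0, 0, 1, by simp⟩
    | zero => exact ⟨0, 0, 0, 0, 0, 0, by simp⟩
    | add x y _ _ hx hy =>
      obtain ⟨a, b, c, d, e, f, h1, h2, h3⟩ := hx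
      obtain ⟨a', b', c', d', e', f', k1, k2, k3⟩ := hy
      refine ⟨a + a', b + b', c + c', d + d', e + e', f + f', ?_, ?_, ?_⟩ <;>
        simp only [Pi.add_apply] <;> push_cast <;> linarith
  have hu := h ![-1, 0, 1] 2 (by norm_num) (by
    rw [show (2 : ℤ) • (![-1, 0, 1] : Fin 3 → ℤ) = ![1, -1, 1] + ![-3, 1, 1] by decide]
    exact add_mem (AddSubmonoid.subset_closure (by simp [nbH]))
      (AddSubmonoid.subset_closure (by simp [nbH])))
  obtain ⟨a, b, c, d, e, f, h1, h2, h3⟩ := key _ hu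
  simp at h1 h2 h3
  omega

lemma nb_top : AddSubgroup.closure nbH = ⊤ := by
  rw [eq_top_iff]
  intro x _
  have hx : x = x 0 • ![1, 0, 0] + x 1 • ![0, 1, 0] + x 2 • ![0, 0, 1] := by
    ext i; fin_cases i <;> simp
  rw [hx]
  refine add_mem (add_mem ?_ ?_) ?_ <;> refine AddSubgroup.zsmul_mem _ (AddSubgroup.subset_closure ?_) _ <;>
    simp [nbH]

lemma nb_map : AddSubmonoid.map nbE.toLinearMap.toAddMonoidHom (AddSubmonoid.closure nbH) =
    AddSubmonoid.closure nbM := by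
  rw [AddMonoidHom.map_mclosure]
  congr 1
  simp [nbH, nbM, Set.image_insert_eq, nbE]

/-- There exist a finitely generated pointed non-saturated submonoid `S ⊆ ℤ³` with group
closure `ℤ³`, a chart `A = {a₁,a₂,a₃}` of the Nash blowup of `X(S)` whose semigroup `S_A` is
pointed, and a chart `A' = {b₁,b₂,b₃}` of the Nash blowup of `X(S_A)` whose semigroup
`(S_A)_{A'}` is pointed and is mapped onto `S` by a `ℤ`-linear automorphism of `ℤ³`: the
second iteration of the Nash blowup of `X(S)` contains an affine chart isomorphic to
`X(S)`. -/
theorem nash_blowup_fails_dim_three :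
    ∃ (H : Set (Fin 3 → ℤ)) (a₁ a₂ a₃ : Fin 3 → ℤ)
      (H' : Set (Fin 3 → ℤ)) (b₁ b₂ b₃ : Fin 3 → ℤ),
      H.Finite ∧
      IsPointed (AddSubmonoid.closure H) ∧
      ¬ Saturated (AddSubmonoid.closure H) ∧
      AddSubgroup.closure H = ⊤ ∧
      {a₁, a₂, a₃} ⊆ H ∧ colDet a₁ a₂ a₃ ≠ 0 ∧
      IsPointed (nashChart H a₁ a₂ a₃) ∧
      H'.Finite ∧
      AddSubmonoid.closure H' = nashChart H a₁ a₂ a₃ ∧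
      {b₁, b₂, b₃} ⊆ H' ∧ colDet b₁ b₂ b₃ ≠ 0 ∧
      IsPointed (nashChart H' b₁ b₂ b₃) ∧
      ∃ e : (Fin 3 → ℤ) ≃ₗ[ℤ] (Fin 3 → ℤ),
        AddSubmonoid.map e.toLinearMap.toAddMonoidHom (AddSubmonoid.closure H) =
          nashChart H' b₁ b₂ b₃ := by
  refine ⟨nbH, ![1, 0, 0], ![0, 2, -1], ![-3, 1, 1], nbK, ![0, -1, 1], ![1, -3, 2], ![4, -2, 0], ?_, ?_, nb_unsat, nb_top, ?_, ?_, ?_, ?_, nb_chart1.symm, ?_, ?_, ?_, nbE, ?_⟩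
  · simp [nbH]
  · apply nb_pointed _ 1 2 2
    rintro g (rfl | rfl | rfl | rfl | rfl | rfl) <;> simp
  · rintro g (rfl | rfl | rfl) <;> simp [nbH]
  · simp [colDet, Matrix.det_fin_three]
  · rw [nb_chart1]
    apply nb_pointed _ 2 3 4
    rintro g (rfl | rfl | rfl | rfl | rfl | rfl | rfl | rfl) <;> simp
  · simp [nbK]
  · rintro g (rfl | rfl | rfl) <;> simp [nbK]
  · simp [colDet, Matrix.det_fin_three]
  · rw [nb_chart2]
    apply nb_pointed _ 4 7 9
    rintro g (rfl | rfl | rfl | rfl | rfl | rfl) <;> simp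
  · rw [nb_chart2, nb_map]
end

section
/- Let k be a field. The kernel of the k-algebra homomorphism from the polynomial ring k[x₁,…,x₆] to the group algebra k[ℤ³] sending x_i to the monomial χ^{h_i} (for h₁=(1,0,0), h₂=(0,1,0), h₃=(0,0,1), h₄=(-2,-1,2), h₅=(1,-1,1), h₆=(2,-2,1)) is the ideal generated by the five binomials x₅² − x₃x₆, x₁x₅ − x₂x₆, x₁x₃ − x₂x₅, x₁²x₂x₄ − x₃², and x₁³x₄ − x₃x₅. -/
open MvPolynomial

/-- The generators `h₁, …, h₆`, indexed by `Fin 6`. -/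
def h : Fin 6 → Fin 3 → ℤ :=
  ![![1, 0, 0], ![0, 1, 0], ![0, 0, 1], ![-2, -1, 2], ![1, -1, 1], ![2, -2, 1]]

theorem red {A : Type*} [CommRing A] (x : Fin 6 → A)
    (r1 : x 4 ^ 2 = x 2 * x 5) (r2 : x 0 * x 4 = x 1 * x 5) (r3 : x 0 * x 2 = x 1 * x 4)
    (r4 : x 0 ^ 2 * x 1 * x 3 = x 2 ^ 2) (r5 : x 0 ^ 3 * x 3 = x 2 * x 4) (N : ℕ) :
    ∀ a b c d e f : ℕ, 3 * b + 2 * c + 2 * e + f ≤ N → ∃ a' b' c' d' e' f' : ℕ,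
      (c' ≤ 1 ∧ (c' = 0 ∨ e' = 0) ∧ e' ≤ 1 ∧ (b' = 0 ∨ e' = 0) ∧ (b' = 0 ∨ f' = 0)) ∧
      (a:ℤ) - 2 * d + e + 2 * f = a' - 2 * d' + e' + 2 * f' ∧
      (b:ℤ) - d - e - 2 * f = b' - d' - e' - 2 * f' ∧
      (c:ℤ) + 2 * d + e + f = c' + 2 * d' + e' + f' ∧
      x 0 ^ a * x 1 ^ b * x 2 ^ c * x 3 ^ d * x 4 ^ e * x 5 ^ f =
      x 0 ^ a' * x 1 ^ b' * x 2 ^ c' * x 3 ^ d' * x 4 ^ e' * x 5 ^ f' := by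
  induction N with
  | zero =>
    intro a b c d e f hN
    exact ⟨a, b, c, d, e, f, by omega, rfl, rfl, rfl, rfl⟩
  | succ N ih =>
    intro a b c d e f hN
    by_cases h1 : 2 ≤ c
    · obtain ⟨c, rfl⟩ := Nat.exists_eq_add_of_le' h1
      obtain ⟨a', b', c', d', e', f', hs, e1, e2, e3, e4⟩ :=
        ih (a + 2) (b + 1) c (d + 1) e f (by omega)
      refine ⟨a', b', c', d', e', f', hs, by push_cast at *; omega, by push_cast at *; omega, by push_cast at *; omega, ?_⟩
      rw [← e4, pow_add (x 2) c 2, ← r4]; ring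
    by_cases h2 : 1 ≤ c ∧ 1 ≤ e
    · obtain ⟨c, rfl⟩ := Nat.exists_eq_add_of_le' h2.1
      obtain ⟨e, rfl⟩ := Nat.exists_eq_add_of_le' h2.2
      obtain ⟨a', b', c', d', e', f', hs, e1, e2, e3, e4⟩ :=
        ih (a + 3) b c (d + 1) e f (by omega)
      refine ⟨a', b', c', d', e', f', hs, by push_cast at *; omega, by push_cast at *; omega, by push_cast at *; omega, ?_⟩
      rw [← e4]
      linear_combination (-(x 0 ^ a * x 1 ^ b * x 2 ^ c * x 3 ^ d * x 4 ^ e * x 5 ^ f)) * r5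
    by_cases h3 : 2 ≤ e
    · obtain ⟨e, rfl⟩ := Nat.exists_eq_add_of_le' h3
      obtain ⟨a', b', c', d', e', f', hs, e1, e2, e3, e4⟩ :=
        ih a b (c + 1) d e (f + 1) (by omega)
      refine ⟨a', b', c', d', e', f', hs, by push_cast at *; omega, by push_cast at *; omega, by push_cast at *; omega, ?_⟩
      rw [← e4]
      linear_combination (x 0 ^ a * x 1 ^ b * x 2 ^ c * x 3 ^ d * x 4 ^ e * x 5 ^ f) * r1
    by_cases h4 : 1 ≤ b ∧ 1 ≤ e
    · obtain ⟨b, rfl⟩ := Nat.exists_eq_add_of_le' h4.1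
      obtain ⟨e, rfl⟩ := Nat.exists_eq_add_of_le' h4.2
      obtain ⟨a', b', c', d', e', f', hs, e1, e2, e3, e4⟩ :=
        ih (a + 1) b (c + 1) d e f (by omega)
      refine ⟨a', b', c', d', e', f', hs, by push_cast at *; omega, by push_cast at *; omega, by push_cast at *; omega, ?_⟩
      rw [← e4]
      linear_combination (-(x 0 ^ a * x 1 ^ b * x 2 ^ c * x 3 ^ d * x 4 ^ e * x 5 ^ f)) * r3
    by_cases h5 : 1 ≤ b ∧ 1 ≤ f
    · obtain ⟨b, rfl⟩ := Nat.exists_eq_add_of_le' h5.1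
      obtain ⟨f, rfl⟩ := Nat.exists_eq_add_of_le' h5.2
      obtain ⟨a', b', c', d', e', f', hs, e1, e2, e3, e4⟩ :=
        ih (a + 1) b c d (e + 1) f (by omega)
      refine ⟨a', b', c', d', e', f', hs, by push_cast at *; omega, by push_cast at *; omega, by push_cast at *; omega, ?_⟩
      rw [← e4]
      linear_combination (-(x 0 ^ a * x 1 ^ b * x 2 ^ c * x 3 ^ d * x 4 ^ e * x 5 ^ f)) * r2
    exact ⟨a, b, c, d, e, f, by omega, rfl, rfl, rfl, rfl⟩

theorem inj6 (a b c d e f a' b' c' d' e' f' : ℕ)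
    (hs : c ≤ 1 ∧ (c = 0 ∨ e = 0) ∧ e ≤ 1 ∧ (b = 0 ∨ e = 0) ∧ (b = 0 ∨ f = 0))
    (hs' : c' ≤ 1 ∧ (c' = 0 ∨ e' = 0) ∧ e' ≤ 1 ∧ (b' = 0 ∨ e' = 0) ∧ (b' = 0 ∨ f' = 0))
    (e1 : (a:ℤ) - 2 * d + e + 2 * f = a' - 2 * d' + e' + 2 * f')
    (e2 : (b:ℤ) - d - e - 2 * f = b' - d' - e' - 2 * f')
    (e3 : (c:ℤ) + 2 * d + e + f = c' + 2 * d' + e' + f') :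
    a = a' ∧ b = b' ∧ c = c' ∧ d = d' ∧ e = e' ∧ f = f' := by
  rcases Nat.eq_zero_or_pos f with hf | hf <;> rcases Nat.eq_zero_or_pos f' with hf' | hf' <;>
  rcases Nat.eq_zero_or_pos b with hb | hb <;> rcases Nat.eq_zero_or_pos b' with hb' | hb' <;>
  omega

theorem prod_eq {A : Type*} [CommRing A] (x : Fin 6 → A)
    (r1 : x 4 ^ 2 = x 2 * x 5) (r2 : x 0 * x 4 = x 1 * x 5) (r3 : x 0 * x 2 = x 1 * x 4)
    (r4 : x 0 ^ 2 * x 1 * x 3 = x 2 ^ 2) (r5 : x 0 ^ 3 * x 3 = x 2 * x 4)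
    (n m : Fin 6 → ℕ) (hnm : ∑ i, n i • h i = ∑ i, m i • h i) :
    ∏ i, x i ^ n i = ∏ i, x i ^ m i := by
  obtain ⟨a, b, c, d, e, f, hs, e1, e2, e3, e4⟩ :=
    red x r1 r2 r3 r4 r5 _ (n 0) (n 1) (n 2) (n 3) (n 4) (n 5) le_rfl
  obtain ⟨a', b', c', d', e', f', hs', e1', e2', e3', e4'⟩ :=
    red x r1 r2 r3 r4 r5 _ (m 0) (m 1) (m 2) (m 3) (m 4) (m 5) le_rfl
  have q0 := congrFun hnm 0
  have q1 := congrFun hnm 1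
  have q2 := congrFun hnm 2
  simp [Fin.sum_univ_six, h] at q0 q1 q2
  obtain ⟨rfl, rfl, rfl, rfl, rfl, rfl⟩ := inj6 a b c d e f a' b' c' d' e' f' hs hs'
    (by linarith) (by linarith) (by linarith)
  rw [Fin.prod_univ_six, Fin.prod_univ_six, e4, e4']

theorem toric_ideal_eq (k : Type*) [Field k] :
    RingHom.ker (MvPolynomial.aeval
        (fun i : Fin 6 => AddMonoidAlgebra.of' k (Fin 3 → ℤ) (h i)) :
      MvPolynomial (Fin 6) k →ₐ[k] AddMonoidAlgebra k (Fin 3 → ℤ)) =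
    Ideal.span
      {(X 4) ^ 2 - X 2 * X 5,
       X 0 * X 4 - X 1 * X 5,
       X 0 * X 2 - X 1 * X 4,
       (X 0) ^ 2 * X 1 * X 3 - (X 2) ^ 2,
       (X 0) ^ 3 * X 3 - X 2 * X 4} := by
  apply le_antisymm
  · set J : Ideal (MvPolynomial (Fin 6) k) := Ideal.span _ with hJ
    have hr : ∀ p q : MvPolynomial (Fin 6) k, p - q ∈ J →
        Ideal.Quotient.mkₐ k J p = Ideal.Quotient.mkₐ k J q := fun p q hpq => by
      simpa using Ideal.Quotient.eq.2 hpq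
    let x : Fin 6 → MvPolynomial (Fin 6) k ⧸ J := fun i => Ideal.Quotient.mkₐ k J (X i)
    have hx : ∀ n m : Fin 6 → ℕ, ∑ i, n i • h i = ∑ i, m i • h i →
        ∏ i, x i ^ n i = ∏ i, x i ^ m i := by
      apply prod_eq
      · exact hr (X 4 ^ 2) (X 2 * X 5)
          (Ideal.subset_span (by simp))
      · exact hr (X 0 * X 4) (X 1 * X 5)
          (Ideal.subset_span (by simp))
      · exact hr (X 0 * X 2) (X 1 * X 4)
          (Ideal.subset_span (by simp))
      · exact hr (X 0 ^ 2 * X 1 * X 3) (X 2 ^ 2)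
          (Ideal.subset_span (by simp))
      · exact hr (X 0 ^ 3 * X 3) (X 2 * X 4)
          (Ideal.subset_span (by simp))
    let nf : (Fin 3 → ℤ) → (Fin 6 → ℕ) :=
      Function.invFun (fun n : Fin 6 → ℕ => ∑ i, n i • h i)
    have hnf : ∀ n : Fin 6 → ℕ, ∑ i, nf (∑ i, n i • h i) i • h i = ∑ i, n i • h i := fun n =>
      Function.invFun_eq (f := fun n : Fin 6 → ℕ => ∑ i, n i • h i) ⟨n, rfl⟩
    let s : AddMonoidAlgebra k (Fin 3 → ℤ) →ₗ[k] MvPolynomial (Fin 6) k ⧸ J :=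
      (Finsupp.linearCombination k (fun v => ∏ i, x i ^ nf v i)) ∘ₗ
        (AddMonoidAlgebra.coeffLinearEquiv k).toLinearMap
    have hs : s ∘ₗ (MvPolynomial.aeval
        (fun i : Fin 6 => AddMonoidAlgebra.of' k (Fin 3 → ℤ) (h i))).toLinearMap =
        (Ideal.Quotient.mkₐ k J).toLinearMap := by
      apply MvPolynomial.linearMap_ext
      intro n
      ext
      have e1 : MvPolynomial.aeval (fun i : Fin 6 => AddMonoidAlgebra.of' k (Fin 3 → ℤ) (h i))
          (monomial n (1 : k)) = AddMonoidAlgebra.single (∑ i, n i • h i) 1 := by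
        rw [aeval_monomial, Finsupp.prod_fintype _ _ (by simp)]
        simp [Fin.prod_univ_six, Fin.sum_univ_six, AddMonoidAlgebra.of'_apply,
          AddMonoidAlgebra.single_pow, AddMonoidAlgebra.single_mul_single]
      have e2 : Ideal.Quotient.mkₐ k J (monomial n (1 : k)) = ∏ i, x i ^ n i := by
        rw [monomial_eq, Finsupp.prod_fintype _ _ (by simp)]
        simp only [map_one, one_mul, map_prod, map_pow, x]
      have e3 : s (AddMonoidAlgebra.single (∑ i, n i • h i) 1) =
          ∏ i, x i ^ nf (∑ i, n i • h i) i := by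
        simp [s]
      simp only [LinearMap.comp_apply, AlgHom.toLinearMap_apply]
      rw [e1, e2, e3]
      exact hx _ _ (hnf _)
    intro p hp
    have h1 := LinearMap.congr_fun hs p
    rw [RingHom.mem_ker] at hp
    simp only [LinearMap.comp_apply, AlgHom.toLinearMap_apply, hp, map_zero] at h1
    exact Ideal.Quotient.eq_zero_iff_mem.1 h1.symm
  · rw [Ideal.span_le]
    rintro p (rfl | rfl | rfl | rfl | rfl) <;>
    simp only [SetLike.mem_coe, RingHom.mem_ker, map_sub, map_mul, map_pow, aeval_X, sub_eq_zero,
      AddMonoidAlgebra.of'_apply, AddMonoidAlgebra.single_pow, AddMonoidAlgebra.single_mul_single, one_pow, mul_one] <;>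
    congr 1 <;> decide
end
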